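/- Let $A\in\mathbb{R}^{m\times m}$ be positive semidefinite of rank $r_A$ with compact eigendecomposition $A=Q\Sigma Q^\top$, where $Q\in\mathbb{R}^{m\times r_A}$ satisfies $Q^\top Q=I$ and $\Sigma$ is diagonal with diagonal entries $\sigma_1(A)\ge\dots\ge\sigma_{r_A}(A)>0$, and let $A^\dagger=Q\Sigma^{-1}Q^\top$. Suppose $1\le r<r_A$ and $0<\eta\le 1$, let $X_0=A\Omega$ for a matrix $\Omega\in\mathbb{R}^{m\times r}$ with $\operatorname{rank}(X_0)=r$, and let $$X_{t+1}=X_t-\eta\,(X_tX_t^\top-A)X_t(X_t^\top X_t)^{-1},\qquad t\ge 0,$$ be the ScaledGD iterates. Put $B_t=X_t^\top A^\dagger X_t$, and let $\lambda_{\min}$ denote the smallest eigenvalue of a symmetric matrix. Then for every $t\ge 0$ the matrix $X_t^\top X_t$ is invertible (so that the iterates are well defined), and $$\lambda_{\min}(B_{t+1})\ \ge\ (1-\eta)-(1-\eta)^{2t+3}+(1-\eta)^{2t+2}\,\lambda_{\min}(B_0).$$ -/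

import Mathlib

open Matrix

/-- The smallest eigenvalue of a real symmetric matrix: the least element of its (finite)
set of eigenvalues. -/
noncomputable def lamMin {n : ℕ} (M : Matrix (Fin n) (Fin n) ℝ) : ℝ :=
  sInf (spectrum ℝ M)

/-- For a symmetric matrix of positive size, `lamMin` is attained: it is the least eigenvalue. -/
theorem lamMin_isLeast {n : ℕ} (hn : 0 < n) {M : Matrix (Fin n) (Fin n) ℝ}
    (hM : M.IsHermitian) : IsLeast (spectrum ℝ M) (lamMin M) := by
  have hfin : (spectrum ℝ M).Finite := by
    rw [hM.spectrum_real_eq_range_eigenvalues]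
    exact Set.finite_range _
  have hne : (spectrum ℝ M).Nonempty :=
    ⟨_, hM.eigenvalues_mem_spectrum_real ⟨0, hn⟩⟩
  exact ⟨hne.csInf_mem hfin, fun _ hx => csInf_le hfin.bddBelow hx⟩

/-- The ScaledGD iterates with step size `η` for the target `A`, started at `X₀`:
`X_{t+1} = X_t − η (X_t X_tᵀ − A) X_t (X_tᵀ X_t)⁻¹`. -/
noncomputable def scaledGD {m r : ℕ} (A : Matrix (Fin m) (Fin m) ℝ) (η : ℝ)
    (X₀ : Matrix (Fin m) (Fin r) ℝ) : ℕ → Matrix (Fin m) (Fin r) ℝ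
  | 0 => X₀
  | t + 1 =>
    scaledGD A η X₀ t -
      η • ((scaledGD A η X₀ t * (scaledGD A η X₀ t)ᵀ - A) * scaledGD A η X₀ t *
        ((scaledGD A η X₀ t)ᵀ * scaledGD A η X₀ t)⁻¹)

/-- A lower bound in the Loewner order by a multiple of the identity bounds `lamMin` from below. -/
theorem le_lamMin_of_posSemidef_sub {n : ℕ} (hn : 0 < n) {M : Matrix (Fin n) (Fin n) ℝ}
    (hM : M.IsHermitian) {c : ℝ} (h : (M - c • (1 : Matrix (Fin n) (Fin n) ℝ)).PosSemidef) :
    c ≤ lamMin M := by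
  have hmem := (lamMin_isLeast hn hM).1
  have hs : lamMin M - c ∈ spectrum ℝ (M - c • (1 : Matrix (Fin n) (Fin n) ℝ)) := by
    rw [← Algebra.algebraMap_eq_smul_one, ← spectrum.sub_singleton_eq]
    exact Set.sub_mem_sub hmem rfl
  have := (Matrix.posSemidef_iff_isHermitian_and_spectrum_nonneg.mp h).2 hs
  exact sub_nonneg.mp this

/-- A symmetric matrix dominates `lamMin` times the identity in the Loewner order. -/
theorem posSemidef_sub_lamMin {n : ℕ} (hn : 0 < n) {M : Matrix (Fin n) (Fin n) ℝ}
    (hM : M.IsHermitian) :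
    (M - lamMin M • (1 : Matrix (Fin n) (Fin n) ℝ)).PosSemidef := by
  rw [Matrix.posSemidef_iff_isHermitian_and_spectrum_nonneg]
  refine ⟨hM.sub (by simp [IsHermitian]), fun x hx => ?_⟩
  rw [← Algebra.algebraMap_eq_smul_one, ← spectrum.sub_singleton_eq] at hx
  obtain ⟨y, hy, z, rfl, rfl⟩ := hx
  exact sub_nonneg.mpr ((lamMin_isLeast hn hM).2 hy)

section Step

variable {m r : ℕ} {A P : Matrix (Fin m) (Fin m) ℝ} {X : Matrix (Fin m) (Fin r) ℝ} {η : ℝ}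

/-- When the Gram matrix is invertible, a ScaledGD step is a combination of `X` and
`A X (Xᵀ X)⁻¹`. -/
theorem scaledGD_step_eq (hG : IsUnit (Xᵀ * X)) :
    X - η • ((X * Xᵀ - A) * X * (Xᵀ * X)⁻¹) =
      (1 - η) • X + η • (A * X * (Xᵀ * X)⁻¹) := by
  have h : X * Xᵀ * X * (Xᵀ * X)⁻¹ = X := by
    rw [Matrix.mul_assoc X, Matrix.mul_assoc X,
      Matrix.mul_nonsing_inv _ ((Matrix.isUnit_iff_isUnit_det _).mp hG), Matrix.mul_one]
  rw [Matrix.sub_mul, Matrix.sub_mul, h]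
  module

/-- The cross term `Xᵀ P X'` between an iterate `X` and its successor `X'`. -/
theorem transpose_mul_pinv_mul_step (hG : IsUnit (Xᵀ * X)) (hPX : P * A * X = X) :
    Xᵀ * P * ((1 - η) • X + η • (A * X * (Xᵀ * X)⁻¹)) =
      (1 - η) • (Xᵀ * P * X) + η • (1 : Matrix (Fin r) (Fin r) ℝ) := by
  have h : Xᵀ * P * (A * X * (Xᵀ * X)⁻¹) = 1 := by
    calc Xᵀ * P * (A * X * (Xᵀ * X)⁻¹) = Xᵀ * (P * A * X) * (Xᵀ * X)⁻¹ := by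
          simp only [Matrix.mul_assoc]
      _ = 1 := by
          rw [hPX, Matrix.mul_nonsing_inv _ ((Matrix.isUnit_iff_isUnit_det _).mp hG)]
  rw [Matrix.mul_add, Matrix.mul_smul, Matrix.mul_smul, h]

/-- A ScaledGD step preserves invertibility of the Gram matrix. -/
theorem isUnit_gram_step (hP : P.PosSemidef) (hη0 : 0 < η) (hη1 : η ≤ 1)
    (hG : IsUnit (Xᵀ * X)) (hPX : P * A * X = X) :
    IsUnit (((1 - η) • X + η • (A * X * (Xᵀ * X)⁻¹))ᵀ *
      ((1 - η) • X + η • (A * X * (Xᵀ * X)⁻¹))) := by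
  have hB : (Xᵀ * P * X).PosSemidef := by
    simpa [conjTranspose_eq_transpose_of_trivial] using hP.conjTranspose_mul_mul_same X
  have hpd : ((1 - η) • (Xᵀ * P * X) + η • (1 : Matrix (Fin r) (Fin r) ℝ)).PosDef :=
    (PosDef.one.smul hη0).posSemidef_add (hB.smul (sub_nonneg.mpr hη1))
  rw [← transpose_mul_pinv_mul_step hG hPX] at hpd
  set Y := (1 - η) • X + η • (A * X * (Xᵀ * X)⁻¹)
  have hinj : Function.Injective Y.mulVec := by
    have h := Matrix.mulVec_injective_of_isUnit hpd.isUnit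
    intro u v huv
    apply h
    simp only [← Matrix.mulVec_mulVec]
    rw [huv]
  have := PosDef.conjTranspose_mul_self Y hinj
  rw [conjTranspose_eq_transpose_of_trivial] at this
  exact this.isUnit

/-- The quadratic form `Xᵀ P X` after a ScaledGD step. -/
theorem step_transpose_mul_pinv_mul_step (hA : A.IsHermitian) (hP : P.IsHermitian)
    (hG : IsUnit (Xᵀ * X)) (hPX : P * A * X = X) :
    ((1 - η) • X + η • (A * X * (Xᵀ * X)⁻¹))ᵀ * P *
        ((1 - η) • X + η • (A * X * (Xᵀ * X)⁻¹)) =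
      (1 - η) ^ 2 • (Xᵀ * P * X) + (2 * η * (1 - η)) • (1 : Matrix (Fin r) (Fin r) ℝ) +
        η ^ 2 • ((X * (Xᵀ * X)⁻¹)ᵀ * A * (X * (Xᵀ * X)⁻¹)) := by
  have hAt : Aᵀ = A := by simpa [conjTranspose_eq_transpose_of_trivial] using hA.eq
  have hPt : Pᵀ = P := by simpa [conjTranspose_eq_transpose_of_trivial] using hP.eq
  have hcross := transpose_mul_pinv_mul_step (η := η) hG hPX
  have hone : (A * X * (Xᵀ * X)⁻¹)ᵀ * P * X = 1 := by
    have h := congrArg transpose (transpose_mul_pinv_mul_step (η := 1) hG hPX)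
    simpa [Matrix.transpose_mul, hPt, Matrix.mul_assoc] using h
  have hquad : (A * X * (Xᵀ * X)⁻¹)ᵀ * P * (A * X * (Xᵀ * X)⁻¹) =
      (X * (Xᵀ * X)⁻¹)ᵀ * A * (X * (Xᵀ * X)⁻¹) := by
    calc _ = (X * (Xᵀ * X)⁻¹)ᵀ * A * (P * A * X) * (Xᵀ * X)⁻¹ := by
          rw [Matrix.mul_assoc A, Matrix.transpose_mul A, hAt]
          simp only [Matrix.mul_assoc]
      _ = _ := by rw [hPX]; simp only [Matrix.mul_assoc]
  rw [Matrix.transpose_add, Matrix.add_mul, Matrix.add_mul, Matrix.transpose_smul,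
    Matrix.transpose_smul, Matrix.smul_mul, Matrix.smul_mul, hcross, Matrix.smul_mul,
    Matrix.smul_mul, Matrix.mul_add, Matrix.mul_smul, Matrix.mul_smul, hone, hquad]
  module

/-- One ScaledGD step contracts the lower bound on `lamMin (Xᵀ P X)` as in the scalar recursion
`b ↦ (1 - η)² b + 2 η (1 - η)`. -/
theorem lamMin_step (hr : 0 < r) (hA : A.PosSemidef) (hP : P.PosSemidef)
    (hG : IsUnit (Xᵀ * X)) (hPX : P * A * X = X) :
    (1 - η) ^ 2 * lamMin (Xᵀ * P * X) + 2 * η * (1 - η) ≤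
      lamMin (((1 - η) • X + η • (A * X * (Xᵀ * X)⁻¹))ᵀ * P *
        ((1 - η) • X + η • (A * X * (Xᵀ * X)⁻¹))) := by
  have hform (Z : Matrix (Fin m) (Fin r) ℝ) {S : Matrix (Fin m) (Fin m) ℝ}
      (hS : S.PosSemidef) : (Zᵀ * S * Z).PosSemidef := by
    simpa [conjTranspose_eq_transpose_of_trivial] using hS.conjTranspose_mul_mul_same Z
  refine le_lamMin_of_posSemidef_sub hr (hform _ hP).isHermitian ?_
  rw [step_transpose_mul_pinv_mul_step hA.isHermitian hP.isHermitian hG hPX]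
  have h := ((posSemidef_sub_lamMin hr (hform X hP).isHermitian).smul (sq_nonneg (1 - η))).add
    ((hform (X * (Xᵀ * X)⁻¹) hA).smul (sq_nonneg η))
  convert h using 1
  module

end Step

/-- Let `A = Q Σ Qᵀ` be a compact eigendecomposition of a positive semidefinite matrix of rank
`rA`, and let `X t` be the ScaledGD iterates from the Nyström initialization `X 0 = A Ω`, of full
rank `r`, where `1 ≤ r < rA`. Then all the matrices `(X t)ᵀ (X t)` that the iteration inverts are
invertible, and `B t = (X t)ᵀ A† (X t)` satisfies
`λ_min(B_{t+1}) ≥ (1 − η) − (1 − η)^{2t+3} + (1 − η)^{2t+2} λ_min(B_0)`. -/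
theorem stmt_7
    (m rA r : ℕ) (hr : 1 ≤ r) (hrrA : r < rA)
    (A : Matrix (Fin m) (Fin m) ℝ)
    (Q : Matrix (Fin m) (Fin rA) ℝ) (d : Fin rA → ℝ)
    (hQ : Qᵀ * Q = 1)
    (hd : ∀ i, 0 < d i)
    (hdanti : Antitone d)
    (hA : A = Q * Matrix.diagonal d * Qᵀ)
    (η : ℝ) (hη0 : 0 < η) (hη1 : η ≤ 1)
    (Ω : Matrix (Fin m) (Fin r) ℝ)
    (X : ℕ → Matrix (Fin m) (Fin r) ℝ)
    (hX : X = scaledGD A η (A * Ω))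
    (hrank : (X 0).rank = r)
    (Apinv : Matrix (Fin m) (Fin m) ℝ)
    (hApinv : Apinv = Q * (Matrix.diagonal d)⁻¹ * Qᵀ)
    (B : ℕ → Matrix (Fin r) (Fin r) ℝ)
    (hB : ∀ t : ℕ, B t = (X t)ᵀ * Apinv * X t) :
    ∀ t : ℕ,
      IsUnit ((X t)ᵀ * X t) ∧
      (1 - η) - (1 - η) ^ (2 * t + 3) + (1 - η) ^ (2 * t + 2) * lamMin (B 0)
        ≤ lamMin (B (t + 1)) := by
  have hdiag : Matrix.diagonal d * (Matrix.diagonal d)⁻¹ = 1 := by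
    refine Matrix.mul_nonsing_inv _ ?_
    rw [Matrix.det_diagonal]
    exact (Finset.prod_ne_zero_iff.mpr fun i _ => (hd i).ne').isUnit
  have hdpos : (Matrix.diagonal d).PosDef := Matrix.PosDef.diagonal hd
  have hAps : A.PosSemidef := by
    rw [hA]
    simpa [conjTranspose_eq_transpose_of_trivial] using
      hdpos.posSemidef.mul_mul_conjTranspose_same Q
  have hPps : Apinv.PosSemidef := by
    rw [hApinv]
    simpa [conjTranspose_eq_transpose_of_trivial] using
      hdpos.inv.posSemidef.mul_mul_conjTranspose_same Q
  have hPA : Apinv * A * A = A := by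
    have hdiag' := mul_eq_one_comm.mp hdiag
    calc Apinv * A * A = Q * ((Matrix.diagonal d)⁻¹ * ((Qᵀ * Q) * (Matrix.diagonal d *
          ((Qᵀ * Q) * (Matrix.diagonal d * Qᵀ))))) := by
          rw [hApinv, hA]; simp only [Matrix.mul_assoc]
      _ = Q * (((Matrix.diagonal d)⁻¹ * Matrix.diagonal d) * (Matrix.diagonal d * Qᵀ)) := by
          rw [hQ, Matrix.one_mul, Matrix.one_mul]; simp only [Matrix.mul_assoc]
      _ = A := by rw [hdiag', Matrix.one_mul, hA, Matrix.mul_assoc]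
  have hstep (t : ℕ) (hG : IsUnit ((X t)ᵀ * X t)) :
      X (t + 1) = (1 - η) • X t + η • (A * X t * ((X t)ᵀ * X t)⁻¹) := by
    rw [← scaledGD_step_eq hG, hX, scaledGD]
  have hinv (t : ℕ) : IsUnit ((X t)ᵀ * X t) ∧ Apinv * A * X t = X t := by
    induction t with
    | zero =>
      constructor
      · rw [← Matrix.mulVec_surjective_iff_isUnit]
        refine (LinearMap.range_eq_top (f := ((X 0)ᵀ * X 0).mulVecLin)).mp ?_
        refine Submodule.eq_top_of_finrank_eq ?_
        rw [← Matrix.rank, Matrix.rank_transpose_mul_self, hrank, Module.finrank_fin_fun]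
      · have h0 : X 0 = A * Ω := by rw [hX, scaledGD]
        rw [h0, ← Matrix.mul_assoc, hPA]
    | succ t ih =>
      obtain ⟨hG, hPX⟩ := ih
      rw [hstep t hG]
      refine ⟨isUnit_gram_step hPps hη0 hη1 hG hPX, ?_⟩
      rw [Matrix.mul_add, Matrix.mul_smul, Matrix.mul_smul, hPX, ← Matrix.mul_assoc,
        ← Matrix.mul_assoc, hPA]
  have hrec (t : ℕ) :
      (1 - η) ^ 2 * lamMin (B t) + 2 * η * (1 - η) ≤ lamMin (B (t + 1)) := by
    rw [hB, hB, hstep t (hinv t).1]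
    exact lamMin_step hr hAps hPps (hinv t).1 (hinv t).2
  have hbound (t : ℕ) :
      (1 - η) - (1 - η) ^ (2 * t + 1) + (1 - η) ^ (2 * t) * lamMin (B 0) ≤ lamMin (B t) := by
    induction t with
    | zero => simp
    | succ t ih =>
      have h1 := mul_le_mul_of_nonneg_left ih (sq_nonneg (1 - η))
      have h2 : 0 ≤ η ^ 2 * (1 - η) := mul_nonneg (sq_nonneg η) (sub_nonneg.mpr hη1)
      calc (1 - η) - (1 - η) ^ (2 * (t + 1) + 1) + (1 - η) ^ (2 * (t + 1)) * lamMin (B 0)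
          = (1 - η) ^ 2 * ((1 - η) - (1 - η) ^ (2 * t + 1) + (1 - η) ^ (2 * t) * lamMin (B 0)) +
            2 * η * (1 - η) - η ^ 2 * (1 - η) := by ring
        _ ≤ lamMin (B (t + 1)) := by linarith [hrec t]
  exact fun t => ⟨(hinv t).1, hbound (t + 1)⟩
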